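/- Let k be a positive even integer, f₀ ∈ M_k(SL(2,ℤ)), f₁ ∈ M_{k-2}(SL(2,ℤ)) with f₁ ≢ 0, and f = f₀ + E₂ f₁. Let W_f and Q_f be as in the context (with α = 6/(πi)). Then there exist κ_i and κ_ρ in (1/2)ℤ with κ_i, κ_ρ ≥ 1/2 such that lim_{z→i} (z−i)² Q_f(z) = (1/4 − κ_i²)/(4π²) and lim_{z→ρ} (z−ρ)² Q_f(z) = (1/4 − κ_ρ²)/(4π²), where i = √−1 and ρ = (1+√−3)/2; moreover, the integer 2κ_i is odd and the integer 2κ_ρ is not divisible by 3. (Equivalently, the local exponents of y″ = −4π² Q_f y at i and ρ are 1/2 ± κ_i and 1/2 ± κ_ρ with gcd(2κ_i,2) = gcd(2κ_ρ,3) = 1.) -/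

import Mathlib

noncomputable section

open Complex Matrix Filter Topology

abbrev SL2R := Matrix.SpecialLinearGroup (Fin 2) ℝ
abbrev SL2Z := Matrix.SpecialLinearGroup (Fin 2) ℤ

/-- The upper half-plane, as a subset of `ℂ`. -/
def UHP : Set ℂ := {z : ℂ | 0 < z.im}

/-- The embedding of `SL(2,ℤ)` into `SL(2,ℝ)`. -/
def toR : SL2Z →* SL2R := Matrix.SpecialLinearGroup.map (Int.castRingHom ℝ)

/-- `SL(2,ℤ)` as a subgroup of `SL(2,ℝ)`. -/
def SL2ZR : Subgroup SL2R := Subgroup.map toR ⊤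

/-- Möbius action of a real matrix on a complex number. -/
def moeb (γ : SL2R) (z : ℂ) : ℂ :=
  ((γ.1 0 0 : ℂ) * z + (γ.1 0 1 : ℂ)) / ((γ.1 1 0 : ℂ) * z + (γ.1 1 1 : ℂ))

/-- The automorphy factor `cz + d`. -/
def jfac (γ : SL2R) (z : ℂ) : ℂ := (γ.1 1 0 : ℂ) * z + (γ.1 1 1 : ℂ)

/-- A holomorphic modular form of weight `k` and character `χ` on `Γ ≤ SL(2,ℝ)`
(for `Γ` commensurable with `SL(2,ℤ)`): holomorphic on `ℍ`, satisfying the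
transformation law, and holomorphic (bounded) at every cusp. -/
structure IsModularForm (Γ : Subgroup SL2R) (χ : SL2R → ℂ) (k : ℤ) (f : ℂ → ℂ) : Prop where
  holo : DifferentiableOn ℂ f UHP
  transform : ∀ γ ∈ Γ, ∀ z ∈ UHP, f (moeb γ z) = χ γ * jfac γ z ^ k * f z
  bdd_at_cusps : ∀ σ : SL2Z, ∃ C : ℝ, ∀ z ∈ UHP, 1 ≤ z.im →
    ‖jfac (toR σ) z ^ (-k) * f (moeb (toR σ) z)‖ ≤ C

/-- A finite-order character of `Γ`. -/
def IsCharacter (Γ : Subgroup SL2R) (χ : SL2R → ℂ) : Prop :=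
  (∀ γ ∈ Γ, ∀ δ ∈ Γ, χ (γ * δ) = χ γ * χ δ) ∧
    ∃ n : ℕ, 0 < n ∧ ∀ γ ∈ Γ, χ γ ^ n = 1

/-- `φ` is quasimodular of weight 2 and depth 1 on `Γ`, with constant `α`:
`(cz+d)⁻² φ(γz) = φ(z) + α c/(cz+d)`. -/
def IsQuasiWt2 (Γ : Subgroup SL2R) (α : ℂ) (φ : ℂ → ℂ) : Prop :=
  ∀ γ ∈ Γ, ∀ z ∈ UHP,
    (jfac γ z)⁻¹ ^ 2 * φ (moeb γ z) = φ z + α * (γ.1 1 0 : ℂ) / jfac γ z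

/-- `f` has vanishing order `ν` at the cusp `∞`, with respect to `q_N = e^{2πiz/N}`:
`q_N^{-ν}·f(z)` tends to a nonzero constant as `Im z → ∞`. -/
def VOrder (N : ℝ) (f : ℂ → ℂ) (ν : ℝ) : Prop :=
  ∃ c : ℂ, c ≠ 0 ∧ ∀ ε : ℝ, 0 < ε → ∃ Y : ℝ, ∀ z : ℂ, Y ≤ z.im →
    ‖Complex.exp (-(2 * Real.pi * Complex.I * (ν : ℂ) * z / (N : ℂ))) * f z - c‖ < ε


/-- `q = e^{2πiz}`. -/
def qexp (z : ℂ) : ℂ := Complex.exp (2 * Real.pi * Complex.I * z)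

/-- The quasimodular Eisenstein series `E₂(z) = 1 - 24 ∑_{n≥1} σ₁(n) qⁿ`. -/
def E2 (z : ℂ) : ℂ :=
  1 - 24 * ∑' n : ℕ, (ArithmeticFunction.sigma 1 (n + 1) : ℂ) * qexp z ^ (n + 1)

/-- The expression `Q_f = -(1/4π²)[f″/f - (f′/f)(W′/W) + (3/4)(W′/W)² - (1/2)(W″/W)]`,
i.e. formally `-(1/4π²)·g″/g` for `g = f/√W`. -/
def Qformula (f W : ℂ → ℂ) (z : ℂ) : ℂ :=
  -(1 / (4 * (Real.pi : ℂ) ^ 2)) *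
    (deriv (deriv f) z / f z - (deriv f z / f z) * (deriv W z / W z)
      + (3 / 4) * (deriv W z / W z) ^ 2 - (1 / 2) * (deriv (deriv W) z / W z))

/-- The elliptic point `ρ = (1+√-3)/2` of `SL(2,ℤ)`. -/
def ρell : ℂ := (1 + Real.sqrt 3 * Complex.I) / 2

theorem aux_euler {z₀ : ℂ} {n : ℕ} {F g : ℂ → ℂ} (hg : AnalyticAt ℂ g z₀)
    (h : ∀ᶠ z in 𝓝 z₀, F z = (z - z₀) ^ n * g z) :
    ∀ᶠ z in 𝓝 z₀, (z - z₀) * deriv F z = (z - z₀) ^ n * (n * g z + (z - z₀) * deriv g z) := by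
  filter_upwards [h.eventually_nhds, hg.eventually_analyticAt] with z hz hgz
  have h1 : deriv F z = deriv (fun z => (z - z₀) ^ n * g z) z :=
    Filter.EventuallyEq.deriv_eq hz
  have h2 : HasDerivAt (fun z : ℂ => (z - z₀) ^ n) (n * (z - z₀) ^ (n - 1) * 1) z :=
    ((hasDerivAt_id z).sub_const z₀).pow n
  have h3 : deriv (fun z => (z - z₀) ^ n * g z) z = _ :=
    (h2.mul hgz.differentiableAt.hasDerivAt).deriv
  rw [h1, h3]
  rcases n with _ | n
  · simp
  · simp only [Nat.add_sub_cancel]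
    ring

theorem aux_euler2 {z₀ : ℂ} {n : ℕ} {F g : ℂ → ℂ} (hF : AnalyticAt ℂ F z₀)
    (hg : AnalyticAt ℂ g z₀) (hg0 : g z₀ ≠ 0)
    (h : ∀ᶠ z in 𝓝 z₀, F z = (z - z₀) ^ n * g z) :
    Tendsto (fun z => (z - z₀) * (deriv F z / F z)) (𝓝[≠] z₀) (𝓝 n) ∧
    Tendsto (fun z => (z - z₀) ^ 2 * (deriv (deriv F) z / F z)) (𝓝[≠] z₀) (𝓝 (n * (n - 1))) := by
  set g1 : ℂ → ℂ := fun z => n * g z + (z - z₀) * deriv g z with hg1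
  have hg1a : AnalyticAt ℂ g1 z₀ := by
    have := hg.deriv
    fun_prop
  have e1 := aux_euler hg h
  have e2 := aux_euler (F := fun z => (z - z₀) * deriv F z) hg1a e1
  have hgc : ContinuousAt g z₀ := hg.continuousAt
  have hgne : ∀ᶠ z in 𝓝 z₀, g z ≠ 0 := hgc.eventually_ne hg0
  have c1 : Tendsto (fun z => g1 z / g z) (𝓝[≠] z₀) (𝓝 n) := by
    have : ContinuousAt (fun z => g1 z / g z) z₀ := hg1a.continuousAt.div hgc hg0
    have h2 := this.tendsto
    have : g1 z₀ / g z₀ = n := by simp [hg1, hg0]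
    rw [this] at h2
    exact h2.mono_left nhdsWithin_le_nhds
  have c2 : Tendsto (fun z => (n * g1 z + (z - z₀) * deriv g1 z - g1 z) / g z) (𝓝[≠] z₀)
      (𝓝 (n * (n - 1))) := by
    have hd := hg1a.deriv
    have : AnalyticAt ℂ (fun z => (n * g1 z + (z - z₀) * deriv g1 z - g1 z)) z₀ := by fun_prop
    have : ContinuousAt (fun z => (n * g1 z + (z - z₀) * deriv g1 z - g1 z) / g z) z₀ :=
      this.continuousAt.div hgc hg0
    have h2 := this.tendsto
    have : (n * g1 z₀ + (z₀ - z₀) * deriv g1 z₀ - g1 z₀) / g z₀ = n * (n - 1) := by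
      rw [div_eq_iff hg0]
      simp [hg1]; ring
    rw [this] at h2
    exact h2.mono_left nhdsWithin_le_nhds
  constructor
  · refine c1.congr' ?_
    filter_upwards [self_mem_nhdsWithin, nhdsWithin_le_nhds h, nhdsWithin_le_nhds e1,
      nhdsWithin_le_nhds hgne] with z hz h0 h1 h2
    have hz' : z - z₀ ≠ 0 := sub_ne_zero.2 hz
    rw [← mul_div_assoc, h1, h0, mul_div_mul_left _ _ (pow_ne_zero _ hz')]
  · refine c2.congr' ?_
    filter_upwards [self_mem_nhdsWithin, nhdsWithin_le_nhds h, nhdsWithin_le_nhds e1,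
      nhdsWithin_le_nhds hgne, nhdsWithin_le_nhds e2,
      nhdsWithin_le_nhds hF.eventually_analyticAt] with z hz h0 h1 h2 h3 h4
    have hz' : z - z₀ ≠ 0 := sub_ne_zero.2 hz
    have h5 : HasDerivAt (fun z : ℂ => (z - z₀)) 1 z := (hasDerivAt_id z).sub_const z₀
    have h6 : deriv (fun z => (z - z₀) * deriv F z) z
        = 1 * deriv F z + (z - z₀) * deriv (deriv F) z :=
      (h5.mul h4.deriv.differentiableAt.hasDerivAt).deriv
    rw [h6] at h3
    have h7 : (z - z₀) ^ 2 * deriv (deriv F) z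
        = (z - z₀) ^ n * (n * g1 z + (z - z₀) * deriv g1 z - g1 z) := by
      linear_combination h3 - h1
    rw [← mul_div_assoc, h7, h0, mul_div_mul_left _ _ (pow_ne_zero _ hz')]

theorem aux_Q {z₀ : ℂ} {m l : ℕ} {f W g h : ℂ → ℂ} (hf : AnalyticAt ℂ f z₀)
    (hW : AnalyticAt ℂ W z₀)
    (hg : AnalyticAt ℂ g z₀) (hg0 : g z₀ ≠ 0)
    (hh : AnalyticAt ℂ h z₀) (hh0 : h z₀ ≠ 0)
    (ef : ∀ᶠ z in 𝓝 z₀, f z = (z - z₀) ^ m * g z)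
    (eW : ∀ᶠ z in 𝓝 z₀, W z = (z - z₀) ^ l * h z) :
    Tendsto (fun z => (z - z₀) ^ 2 * Qformula f W z) (𝓝[≠] z₀)
      (𝓝 ((1 / 4 - ((2 * (m : ℂ) - l - 1) / 2) ^ 2) / (4 * (Real.pi : ℂ) ^ 2))) := by
  obtain ⟨f1, f2⟩ := aux_euler2 hf hg hg0 ef
  obtain ⟨w1, w2⟩ := aux_euler2 hW hh hh0 eW
  have := (((f2.sub (f1.mul w1)).add ((w1.pow 2).const_mul (3 / 4 : ℂ))).sub
    (w2.const_mul (1 / 2 : ℂ))).const_mul (-(1 / (4 * (Real.pi : ℂ) ^ 2)))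
  convert this using 2
  · unfold Qformula
    ring
  · ring

theorem aux_order {z₀ : ℂ} {a : ℕ} {F g φ ψ χ : ℂ → ℂ} (hg : ContinuousAt g z₀) (hg0 : g z₀ ≠ 0)
    (hF : ∀ᶠ z in 𝓝 z₀, F z = (z - z₀) ^ a * g z)
    (hφ : ContinuousAt φ z₀) (hφ0 : φ z₀ = z₀) (hψ : ContinuousAt ψ z₀) (hχ : ContinuousAt χ z₀)
    (h1 : ∀ᶠ z in 𝓝 z₀, φ z - z₀ = (z - z₀) * ψ z)
    (h2 : ∀ᶠ z in 𝓝 z₀, F (φ z) = χ z * F z) : ψ z₀ ^ a = χ z₀ := by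
  have hgφ : ContinuousAt (fun z => g (φ z)) z₀ := by
    apply ContinuousAt.comp (g := g) _ hφ
    rwa [hφ0]
  have t1 : Tendsto (fun z => ψ z ^ a * g (φ z)) (𝓝[≠] z₀) (𝓝 (ψ z₀ ^ a * g z₀)) := by
    have : Tendsto (fun z => ψ z ^ a * g (φ z)) (𝓝 z₀) (𝓝 (ψ z₀ ^ a * g (φ z₀))) :=
      ((hψ.pow a).mul hgφ).tendsto
    rw [hφ0] at this
    exact this.mono_left nhdsWithin_le_nhds
  have t2 : Tendsto (fun z => χ z * g z) (𝓝[≠] z₀) (𝓝 (χ z₀ * g z₀)) :=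
    (hχ.mul hg).tendsto.mono_left nhdsWithin_le_nhds
  have hφt : Tendsto φ (𝓝 z₀) (𝓝 z₀) := by
    have := hφ.tendsto
    rwa [hφ0] at this
  have : ψ z₀ ^ a * g z₀ = χ z₀ * g z₀ := by
    refine tendsto_nhds_unique (t1.congr' ?_) t2
    filter_upwards [self_mem_nhdsWithin, nhdsWithin_le_nhds hF, nhdsWithin_le_nhds h1,
      nhdsWithin_le_nhds h2, nhdsWithin_le_nhds (hφt.eventually hF)] with z hz e1 e2 e3 e4
    have hz' : (z - z₀) ^ a ≠ 0 := pow_ne_zero _ (sub_ne_zero.2 hz)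
    apply mul_left_cancel₀ hz'
    rw [e4, e1, e2, mul_pow] at e3
    linear_combination e3
  exact mul_right_cancel₀ hg0 this

theorem aux_local {z₀ w₀ α : ℂ} (hzw : z₀ ≠ w₀) (hα : α ≠ 0) {a b : ℕ} (hab : a ≠ b)
    {f f₁ W gA gB : ℂ → ℂ}
    (hf : AnalyticAt ℂ f z₀) (hf₁ : AnalyticAt ℂ f₁ z₀)
    (hW : ∀ z, W z = -(f z) ^ 2 + α * (f₁ z * deriv f z - deriv f₁ z * f z))
    (hgA : AnalyticAt ℂ gA z₀) (hgA0 : gA z₀ ≠ 0)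
    (hgB : AnalyticAt ℂ gB z₀) (hgB0 : gB z₀ ≠ 0)
    (eA : ∀ᶠ z in 𝓝 z₀, (z - z₀) * f z + α * f₁ z = (z - z₀) ^ a * gA z)
    (eB : ∀ᶠ z in 𝓝 z₀, (z - w₀) * f z + α * f₁ z = (z - z₀) ^ b * gB z) :
    Tendsto (fun z => (z - z₀) ^ 2 * Qformula f W z) (𝓝[≠] z₀)
      (𝓝 ((1 / 4 - (((a : ℂ) - b) / 2) ^ 2) / (4 * (Real.pi : ℂ) ^ 2))) := by
  have hzw' : z₀ - w₀ ≠ 0 := sub_ne_zero.2 hzw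
  have hWa : AnalyticAt ℂ W z₀ := by
    have h1 := hf.deriv
    have h2 := hf₁.deriv
    have : W = fun z => -(f z) ^ 2 + α * (f₁ z * deriv f z - deriv f₁ z * f z) := funext hW
    rw [this]
    fun_prop
  have hab' : (a : ℂ) - b ≠ 0 := sub_ne_zero.2 (by exact_mod_cast hab)
  -- the factorisation of W
  obtain ⟨l, hl⟩ : ∃ l, a + b = l + 1 := ⟨a + b - 1, by omega⟩
  have dA := aux_euler hgA eA
  have dB := aux_euler hgB eB
  set h : ℂ → ℂ := fun z => -(z₀ - w₀)⁻¹ * ((a * gA z + (z - z₀) * deriv gA z) * gB z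
    - gA z * (b * gB z + (z - z₀) * deriv gB z)) with hh
  have hha : AnalyticAt ℂ h z₀ := by
    have h1 := hgA.deriv
    have h2 := hgB.deriv
    fun_prop
  have hh0 : h z₀ ≠ 0 := by
    have : h z₀ = -(z₀ - w₀)⁻¹ * (((a : ℂ) - b) * (gA z₀ * gB z₀)) := by
      simp only [hh]; ring
    rw [this]
    simp [hzw', hab', hgA0, hgB0]
  have eW0 : ∀ᶠ z in 𝓝 z₀, (z - z₀) * W z = (z - z₀) * ((z - z₀) ^ l * h z) := by
    filter_upwards [dA, dB, eA, eB, hf.eventually_analyticAt, hf₁.eventually_analyticAt] with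
      z d1 d2 e1 e2 a1 a2
    have key : ∀ c : ℂ, deriv (fun z => (z - c) * f z + α * f₁ z) z
        = f z + (z - c) * deriv f z + α * deriv f₁ z := by
      intro c
      have h5 : HasDerivAt (fun z : ℂ => (z - c)) 1 z := (hasDerivAt_id z).sub_const c
      have : deriv (fun z => (z - c) * f z + α * f₁ z) z = _ :=
        ((h5.mul a1.differentiableAt.hasDerivAt).add
        (a2.differentiableAt.hasDerivAt.const_mul α)).deriv
      rw [this, one_mul]
    rw [key] at d1 d2
    have hp : (z - z₀) * (z - z₀) ^ l = (z - z₀) ^ a * (z - z₀) ^ b := by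
      rw [← pow_add, hl]; ring
    rw [← mul_assoc, hp, hW]
    simp only [hh]
    have : (z₀ - w₀) * ((z - z₀) * (-(f z) ^ 2 + α * (f₁ z * deriv f z - deriv f₁ z * f z)))
      = - ((z - z₀) ^ a * (z - z₀) ^ b * ((a * gA z + (z - z₀) * deriv gA z) * gB z
    - gA z * (b * gB z + (z - z₀) * deriv gB z))) := by
      linear_combination -((z - w₀) * f z + α * f₁ z) * d1
        - ((z - z₀) ^ a * (a * gA z + (z - z₀) * deriv gA z)) * e2
        + ((z - z₀) * f z + α * f₁ z) * d2
        + ((z - z₀) ^ b * (b * gB z + (z - z₀) * deriv gB z)) * e1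
    apply mul_left_cancel₀ hzw'
    rw [this]
    field_simp
  have eW : ∀ᶠ z in 𝓝 z₀, W z = (z - z₀) ^ l * h z := by
    have hR : AnalyticAt ℂ (fun z => (z - z₀) ^ l * h z) z₀ := by fun_prop
    refine (hWa.frequently_eq_iff_eventually_eq hR).1 (Filter.Eventually.frequently ?_)
    filter_upwards [self_mem_nhdsWithin, nhdsWithin_le_nhds eW0] with z hz e
    exact mul_left_cancel₀ (sub_ne_zero.2 hz) e
  have hl' : (l : ℂ) = a + b - 1 := by
    have : ((a + b : ℕ) : ℂ) = ((l + 1 : ℕ) : ℂ) := by rw [hl]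
    push_cast at this
    linear_combination -this
  have fEq : ∀ᶠ z in 𝓝 z₀, f z = (z₀ - w₀)⁻¹ * ((z - z₀) ^ b * gB z - (z - z₀) ^ a * gA z) := by
    filter_upwards [eA, eB] with z e1 e2
    rw [← e1, ← e2]
    field_simp
    ring
  rcases lt_or_gt_of_ne hab with hlt | hlt
  · obtain ⟨d, hd⟩ : ∃ d, b = a + (d + 1) := ⟨b - a - 1, by omega⟩
    have := aux_Q (m := a) (l := l) (g := fun z => (z₀ - w₀)⁻¹ * ((z - z₀) ^ (d + 1) * gB z - gA z))
      hf hWa (by fun_prop) (by simp [hzw', hgA0]) hha hh0 (by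
        filter_upwards [fEq] with z e
        rw [e, hd, pow_add]; ring) eW
    convert this using 4
    rw [hl']; ring
  · obtain ⟨d, hd⟩ : ∃ d, a = b + (d + 1) := ⟨a - b - 1, by omega⟩
    have := aux_Q (m := b) (l := l) (g := fun z => (z₀ - w₀)⁻¹ * (gB z - (z - z₀) ^ (d + 1) * gA z))
      hf hWa (by fun_prop) (by simp [hzw', hgB0]) hha hh0 (by
        filter_upwards [fEq] with z e
        rw [e, hd, pow_add]; ring) eW
    convert this using 4
    rw [hl']; ring

theorem E2_eq_mathlib (z : UpperHalfPlane) : E2 (z : ℂ) = EisensteinSeries.E2 z := by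
  rw [EisensteinSeries.E2_eq_tsum_cexp, E2]
  congr 2
  rw [tsum_pnat_eq_tsum_succ (f := fun n : ℕ => (ArithmeticFunction.sigma 1 n : ℂ) *
    Complex.exp (2 * Real.pi * Complex.I * z) ^ n)]
  rfl

theorem E2_diff : DifferentiableOn ℂ E2 UHP := by
  have := UpperHalfPlane.mdifferentiable_iff.1 E2_mdifferentiable
  refine this.congr (fun z hz => ?_)
  have := E2_eq_mathlib ⟨z, hz⟩
  simp only [Function.comp, UpperHalfPlane.ofComplex_apply_of_im_pos hz]
  exact this

theorem E2_add_int (z : ℂ) (p : ℤ) : E2 (p + z) = E2 z := by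
  have : qexp (p + z) = qexp z := by
    unfold qexp
    rw [Complex.exp_eq_exp_iff_exists_int]
    exact ⟨p, by ring⟩
  simp [E2, this]

theorem E2_S {z : ℂ} (hz : z ∈ UHP) :
    E2 (-z⁻¹) = z ^ 2 * E2 z + 6 / (Real.pi * Complex.I) * z := by
  have h := congrFun (EisensteinSeries.E2_slash_action ModularGroup.S) ⟨z, hz⟩
  have hz0 : z ≠ 0 := by
    rintro rfl
    simp [UHP] at hz
  rw [ModularForm.SL_slash_apply] at h
  simp only [UpperHalfPlane.modular_S_smul, Pi.sub_apply, Pi.smul_apply,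
    EisensteinSeries.D2_S, ← E2_eq_mathlib, riemannZeta_two, smul_eq_mul] at h
  have hpi : (Real.pi : ℂ) ≠ 0 := by exact_mod_cast Real.pi_ne_zero
  have e : (-z)⁻¹ = -z⁻¹ := by rw [neg_inv]
  simp only [e] at h
  have hd : UpperHalfPlane.denom (SpecialLinearGroup.toGL
      ((SpecialLinearGroup.map (Int.castRingHom ℝ)) ModularGroup.S)) z = z :=
    ModularGroup.denom_S ⟨z, hz⟩
  rw [hd] at h
  field_simp at h ⊢
  linear_combination Complex.I * h - 6 * z * Complex.I_sq

theorem toR_entry (γ : SL2Z) (i j : Fin 2) : (toR γ).1 i j = ((γ.1 i j : ℤ) : ℝ) := rfl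

theorem mod_trans {k : ℤ} {f : ℂ → ℂ} (hf : IsModularForm SL2ZR (fun _ => 1) k f) (p : ℤ)
    {z : ℂ} (hz : z ∈ UHP) : f ((p * z - 1) / z) = z ^ k * f z := by
  let γ : SL2Z := ⟨!![p, -1; 1, 0], by simp [Matrix.det_fin_two]⟩
  have := hf.transform (toR γ) ⟨γ, trivial, rfl⟩ z hz
  have e00 : (toR γ).1 0 0 = p := by rw [toR_entry]; simp [γ]
  have e01 : (toR γ).1 0 1 = -1 := by rw [toR_entry]; simp [γ]
  have e10 : (toR γ).1 1 0 = 1 := by rw [toR_entry]; simp [γ]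
  have e11 : (toR γ).1 1 1 = 0 := by rw [toR_entry]; simp [γ]
  simp only [moeb, jfac, e00, e01, e10, e11] at this
  simpa [sub_eq_add_neg] using this

theorem mod_T {k : ℤ} {f : ℂ → ℂ} (hf : IsModularForm SL2ZR (fun _ => 1) k f)
    {z : ℂ} (hz : z ∈ UHP) : f (z + 1) = f z := by
  let γ : SL2Z := ⟨!![1, 1; 0, 1], by simp [Matrix.det_fin_two]⟩
  have := hf.transform (toR γ) ⟨γ, trivial, rfl⟩ z hz
  have e00 : (toR γ).1 0 0 = 1 := by rw [toR_entry]; simp [γ]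
  have e01 : (toR γ).1 0 1 = 1 := by rw [toR_entry]; simp [γ]
  have e10 : (toR γ).1 1 0 = 0 := by rw [toR_entry]; simp [γ]
  have e11 : (toR γ).1 1 1 = 1 := by rw [toR_entry]; simp [γ]
  simp only [moeb, jfac, e00, e01, e10, e11] at this
  simpa using this

theorem UHP_open : IsOpen UHP := isOpen_lt continuous_const Complex.continuous_im

theorem UHP_preconn : IsPreconnected UHP := (convex_halfSpace_im_gt 0).isPreconnected

theorem aux_nonzero {α : ℂ} (hα : α ≠ 0) {f f₁ : ℂ → ℂ}
    (hf : DifferentiableOn ℂ f UHP) (hf₁ : DifferentiableOn ℂ f₁ UHP)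
    (hfT : ∀ z ∈ UHP, f (z + 1) = f z) (hf₁T : ∀ z ∈ UHP, f₁ (z + 1) = f₁ z)
    (hne : ∃ z ∈ UHP, f₁ z ≠ 0) {z₀ : ℂ} (hz₀ : z₀ ∈ UHP) (c : ℂ) :
    ∃ (a : ℕ) (g : ℂ → ℂ), AnalyticAt ℂ g z₀ ∧ g z₀ ≠ 0 ∧
      ∀ᶠ z in 𝓝 z₀, (z - c) * f z + α * f₁ z = (z - z₀) ^ a * g z := by
  have hA : DifferentiableOn ℂ (fun z => (z - c) * f z + α * f₁ z) UHP := by fun_prop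
  have hAn := hA.analyticOnNhd UHP_open
  have hfin : analyticOrderAt (fun z => (z - c) * f z + α * f₁ z) z₀ ≠ ⊤ := by
    intro htop
    rw [analyticOrderAt_eq_top] at htop
    have hz := hAn.eqOn_zero_of_preconnected_of_eventuallyEq_zero UHP_preconn hz₀ htop
    obtain ⟨z, hzU, hz1⟩ := hne
    have h1 : (z - c) * f z + α * f₁ z = 0 := hz hzU
    have hzU' : z + 1 ∈ UHP := by simpa [UHP] using hzU
    have h2 : (z + 1 - c) * f (z + 1) + α * f₁ (z + 1) = 0 := hz hzU'
    rw [hfT z hzU, hf₁T z hzU] at h2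
    have h3 : f z = 0 := by linear_combination h2 - h1
    rw [h3] at h1
    simp [hα, hz1] at h1
  obtain ⟨g, hg, hg0, e⟩ := (hAn z₀ hz₀).analyticOrderAt_ne_top.1 hfin
  exact ⟨_, g, hg, hg0, e.mono (fun z hz => by simpa using hz)⟩

theorem aux_main {k : ℤ} {α : ℂ} (hα : α ≠ 0) {f f₁ W : ℂ → ℂ}
    (hf : DifferentiableOn ℂ f UHP) (hf₁ : DifferentiableOn ℂ f₁ UHP)
    (hfT : ∀ z ∈ UHP, f (z + 1) = f z) (hf₁T : ∀ z ∈ UHP, f₁ (z + 1) = f₁ z)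
    (hne : ∃ z ∈ UHP, f₁ z ≠ 0)
    (hW : ∀ z, W z = -(f z) ^ 2 + α * (f₁ z * deriv f z - deriv f₁ z * f z))
    {z₀ w₀ : ℂ} (hz₀ : z₀ ∈ UHP) {p : ℂ} (hs : z₀ + w₀ = p) (hp : z₀ * w₀ = 1) (hzw : z₀ ≠ w₀)
    (tf : ∀ z ∈ UHP, f ((p * z - 1) / z) = z ^ k * f z + α * z ^ (k - 1) * f₁ z)
    (tf₁ : ∀ z ∈ UHP, f₁ ((p * z - 1) / z) = z ^ (k - 2) * f₁ z) :
    ∃ a b : ℕ, (w₀ ^ 2) ^ a = (w₀ ^ 2) ^ (b + 1) ∧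
    Tendsto (fun z => (z - z₀) ^ 2 * Qformula f W z) (𝓝[≠] z₀)
      (𝓝 ((1 / 4 - (((a : ℂ) - b) / 2) ^ 2) / (4 * (Real.pi : ℂ) ^ 2))) := by
  obtain ⟨a, gA, hgA, hgA0, eA⟩ := aux_nonzero hα hf hf₁ hfT hf₁T hne hz₀ z₀
  obtain ⟨b, gB, hgB, hgB0, eB⟩ := aux_nonzero hα hf hf₁ hfT hf₁T hne hz₀ w₀
  have hz0 : z₀ ≠ 0 := left_ne_zero_of_mul_eq_one hp
  have hw0 : w₀ ≠ 0 := right_ne_zero_of_mul_eq_one hp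
  have hwz : w₀ = z₀⁻¹ := eq_inv_of_mul_eq_one_right hp
  have hnhds : ∀ᶠ z in 𝓝 z₀, z ∈ UHP := UHP_open.mem_nhds hz₀
  have hUne : ∀ z ∈ UHP, z ≠ 0 := by
    rintro z hz rfl
    simp [UHP] at hz
  have hφ : ContinuousAt (fun z => (p * z - 1) / z) z₀ := by fun_prop (disch := assumption)
  have hφ0 : (p * z₀ - 1) / z₀ = z₀ := by
    rw [div_eq_iff hz0]; linear_combination -z₀ * hs + hp
  have hψ : ContinuousAt (fun z => w₀ / z) z₀ := by fun_prop (disch := assumption)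
  have hzk : ContinuousAt (fun z : ℂ => z ^ (k - 1)) z₀ := continuousAt_zpow₀ _ _ (Or.inl hz0)
  have hφψ : ∀ᶠ z in 𝓝 z₀, (p * z - 1) / z - z₀ = (z - z₀) * (w₀ / z) := by
    filter_upwards [hnhds] with z hz
    have := hUne z hz
    field_simp
    linear_combination -z * hs + hp
  have pows : ∀ z ∈ UHP, z ^ k = z ^ (k - 2) * z ^ 2 ∧ z ^ (k - 1) = z ^ (k - 2) * z := by
    intro z hz
    have := hUne z hz
    constructor
    · rw [← zpow_natCast, ← zpow_add₀ this]; congr 1; push_cast; ring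
    · rw [← zpow_add_one₀ this]; congr 1; ring
  have oA := aux_order (χ := fun z => w₀ * z ^ (k - 1)) hgA.continuousAt hgA0 eA hφ hφ0 hψ
    (by fun_prop) hφψ (by
      filter_upwards [hnhds] with z hz
      have hz' := hUne z hz
      obtain ⟨e1, e2⟩ := pows z hz
      rw [tf z hz, tf₁ z hz, e1, e2]
      have : (p * z - 1) / z - z₀ = (z - z₀) * (w₀ / z) := by
        field_simp
        linear_combination -z * hs + hp
      rw [this]
      field_simp
      linear_combination (-α * f₁ z) * hp)
  have oB := aux_order (χ := fun z => z₀ * z ^ (k - 1)) hgB.continuousAt hgB0 eB hφ hφ0 hψ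
    (by fun_prop) hφψ (by
      filter_upwards [hnhds] with z hz
      have hz' := hUne z hz
      obtain ⟨e1, e2⟩ := pows z hz
      rw [tf z hz, tf₁ z hz, e1, e2]
      have : (p * z - 1) / z - w₀ = (z - w₀) * (z₀ / z) := by
        field_simp
        linear_combination -z * hs + hp
      rw [this]
      field_simp
      linear_combination (-α * f₁ z) * hp)
  have hdiv : w₀ / z₀ = w₀ ^ 2 := by rw [hwz]; field_simp
  simp only [hdiv] at oA oB
  have hrel : (w₀ ^ 2) ^ a = (w₀ ^ 2) ^ (b + 1) := by
    rw [pow_succ _ b, oA, oB]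
    linear_combination (-w₀ * z₀ ^ (k - 1)) * hp
  refine ⟨a, b, hrel, aux_local hzw hα ?_ ((hf.analyticOnNhd UHP_open) z₀ hz₀)
    ((hf₁.analyticOnNhd UHP_open) z₀ hz₀) hW hgA hgA0 hgB hgB0 eA eB⟩
  rintro rfl
  rw [pow_succ _ a] at hrel
  have h1 : w₀ ^ 2 = 1 := by
    have : (w₀ ^ 2) ^ a ≠ 0 := by positivity
    exact mul_left_cancel₀ this (by rw [← hrel, mul_one])
  apply hzw
  linear_combination (-z₀) * h1 + w₀ * hp

/-- local exponents of `y″ = -4π² Q_f y` at the elliptic points of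
`SL(2,ℤ)`: the local exponents at `i` and `ρ` are `1/2 ± κ_i` and `1/2 ± κ_ρ` with
`κ_i, κ_ρ ∈ (1/2)ℕ`, `gcd(2κ_i,2) = gcd(2κ_ρ,3) = 1`. We write `2κ_i = n_i`,
`2κ_ρ = n_ρ` with `n_i, n_ρ` positive integers. -/
theorem local_exponents_elliptic_SL2Z
    (k : ℤ) (hk : 0 < k) (hkeven : Even k)
    (f₀ f₁ : ℂ → ℂ)
    (hf₀ : IsModularForm SL2ZR (fun _ => 1) k f₀)
    (hf₁ : IsModularForm SL2ZR (fun _ => 1) (k - 2) f₁)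
    (hf₁ne : ∃ z ∈ UHP, f₁ z ≠ 0)
    (f W Q : ℂ → ℂ)
    (hf : ∀ z, f z = f₀ z + E2 z * f₁ z)
    (hW : ∀ z, W z = -(f z) ^ 2
      + (6 / ((Real.pi : ℂ) * Complex.I)) * (f₁ z * deriv f z - deriv f₁ z * f z))
    (hQ : ∀ z, Q z = Qformula f W z)
    (S : Set ℂ) (hS : S = {z | z ∈ UHP ∧ f z ≠ 0 ∧ W z ≠ 0}) :
    ∃ ni nρ : ℤ, 1 ≤ ni ∧ 1 ≤ nρ ∧ Odd ni ∧ ¬ (3 ∣ nρ) ∧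
      Tendsto (fun z : ℂ => (z - Complex.I) ^ 2 * Q z) (𝓝[S \ {Complex.I}] Complex.I)
        (𝓝 ((1 / 4 - ((ni : ℂ) / 2) ^ 2) / (4 * (Real.pi : ℂ) ^ 2))) ∧
      Tendsto (fun z : ℂ => (z - ρell) ^ 2 * Q z) (𝓝[S \ {ρell}] ρell)
        (𝓝 ((1 / 4 - ((nρ : ℂ) / 2) ^ 2) / (4 * (Real.pi : ℂ) ^ 2))) := by
  have hpi : (Real.pi : ℂ) ≠ 0 := by exact_mod_cast Real.pi_ne_zero
  set α : ℂ := 6 / ((Real.pi : ℂ) * Complex.I) with hαdef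
  have hα : α ≠ 0 := by simp [hαdef, hpi]
  have hfd : DifferentiableOn ℂ f UHP := by
    have : f = fun z => f₀ z + E2 z * f₁ z := funext hf
    rw [this]
    exact hf₀.holo.add (E2_diff.mul hf₁.holo)
  have hf₁T : ∀ z ∈ UHP, f₁ (z + 1) = f₁ z := fun z hz => mod_T hf₁ hz
  have hfT : ∀ z ∈ UHP, f (z + 1) = f z := by
    intro z hz
    have := E2_add_int z 1
    rw [hf, hf, mod_T hf₀ hz, mod_T hf₁ hz, add_comm z 1]
    push_cast at this
    rw [this]
  have tf₁ : ∀ p : ℤ, ∀ z ∈ UHP, f₁ ((p * z - 1) / z) = z ^ (k - 2) * f₁ z :=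
    fun p z hz => mod_trans hf₁ p hz
  have tf : ∀ p : ℤ, ∀ z ∈ UHP, f ((p * z - 1) / z) = z ^ k * f z + α * z ^ (k - 1) * f₁ z := by
    intro p z hz
    have hz' : z ≠ 0 := by
      rintro rfl
      simp [UHP] at hz
    have e : E2 ((p * z - 1) / z) = z ^ 2 * E2 z + α * z := by
      rw [← E2_S hz, ← E2_add_int (-z⁻¹) p]
      congr 1
      field_simp
      ring
    have e1 : z ^ k = z ^ (k - 2) * z ^ 2 := by
      rw [← zpow_natCast, ← zpow_add₀ hz']; congr 1; push_cast; ring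
    have e2 : z ^ (k - 1) = z ^ (k - 2) * z := by
      rw [← zpow_add_one₀ hz']; congr 1; ring
    rw [hf, hf, mod_trans hf₀ p hz, mod_trans hf₁ p hz, e, e1, e2]
    ring
  have hQ' : Q = Qformula f W := funext hQ
  rw [hQ']
  have h3 : (0 : ℝ) < Real.sqrt 3 := by positivity
  have h33 : ((Real.sqrt 3 : ℝ) : ℂ) ^ 2 = 3 := by
    rw [← Complex.ofReal_pow, Real.sq_sqrt (by norm_num)]; norm_num
  have hρU : ρell ∈ UHP := by
    simp [UHP, ρell]
  have hρ2 : ρell ^ 2 = ρell - 1 := by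
    unfold ρell
    linear_combination (1 / 4 : ℂ) * Complex.I ^ 2 * h33 + (3 / 4 : ℂ) * Complex.I_sq
  obtain ⟨a, b, hab, hT⟩ := aux_main (z₀ := Complex.I) (w₀ := -Complex.I) (p := (0 : ℤ)) hα hfd
    hf₁.holo hfT hf₁T hf₁ne hW (by simp [UHP]) (by simp) (by simp)
    (by
      intro h
      have := congrArg Complex.im h
      norm_num at this) (tf 0) (tf₁ 0)
  obtain ⟨c, d, hcd, hT'⟩ := aux_main (z₀ := ρell) (w₀ := 1 - ρell) (p := (1 : ℤ)) hα hfd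
    hf₁.holo hfT hf₁T hf₁ne hW hρU (by simp) (by linear_combination -hρ2)
    (by
      intro h
      have := congrArg Complex.im h
      have h2 : 0 < ρell.im := hρU
      simp at this
      linarith) (tf 1) (tf₁ 1)
  have hi : Odd ((a : ℤ) - b) := by
    have e : (-Complex.I) ^ 2 = -1 := by simp
    rw [e] at hab
    rcases Nat.even_or_odd a with ha | ha <;> rcases Nat.even_or_odd b with hb | hb
    · rw [ha.neg_one_pow, hb.add_one.neg_one_pow] at hab
      norm_num at hab
    · obtain ⟨u, hu⟩ := ha
      obtain ⟨v, hv⟩ := hb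
      exact ⟨(u : ℤ) - v - 1, by omega⟩
    · obtain ⟨u, hu⟩ := ha
      obtain ⟨v, hv⟩ := hb
      exact ⟨(u : ℤ) - v, by omega⟩
    · rw [ha.neg_one_pow, hb.add_one.neg_one_pow] at hab
      norm_num at hab
  have hρ : ¬ (3 : ℤ) ∣ (c : ℤ) - d := by
    set ω : ℂ := (1 - ρell) ^ 2 with hω
    have hωeq : ω = -ρell := by rw [hω]; linear_combination hρ2
    have h1 : ω ≠ 1 := by
      intro h
      have h2 : 0 < ρell.im := hρU
      have := congrArg Complex.im (hωeq.symm.trans h)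
      simp at this
      linarith
    have h3 : ω ^ 3 = 1 := by
      rw [hωeq]; linear_combination (-ρell - 1) * hρ2
    intro hdvd
    have hmod : c % 3 = d % 3 := by omega
    have hpow : ω ^ c = ω ^ d := by
      rw [pow_eq_pow_mod c h3, hmod, ← pow_eq_pow_mod d h3]
    have hω0 : ω ≠ 0 := by
      intro h
      rw [h] at h3
      norm_num at h3
    rw [hpow, pow_succ _ d] at hcd
    exact h1 (mul_left_cancel₀ (pow_ne_zero d hω0) (by rw [← hcd, mul_one]))
  refine ⟨|(a : ℤ) - b|, |(c : ℤ) - d|, ?_, ?_, ?_, ?_, ?_, ?_⟩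
  · exact Int.one_le_abs (by rintro h; rw [h] at hi; simp at hi)
  · exact Int.one_le_abs (by rintro h; rw [h] at hρ; simp at hρ)
  · exact odd_abs.2 hi
  · rwa [dvd_abs]
  · have e : ((|(a : ℤ) - b| : ℤ) : ℂ) ^ 2 = ((a : ℂ) - b) ^ 2 := by
      have := sq_abs ((a : ℤ) - b)
      exact_mod_cast this
    rw [div_pow, e, ← div_pow]
    exact hT.mono_left (nhdsWithin_mono _ (fun z hz => hz.2))
  · have e : ((|(c : ℤ) - d| : ℤ) : ℂ) ^ 2 = ((c : ℂ) - d) ^ 2 := by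
      have := sq_abs ((c : ℤ) - d)
      exact_mod_cast this
    rw [div_pow, e, ← div_pow]
    exact hT'.mono_left (nhdsWithin_mono _ (fun z hz => hz.2))
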